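/- arXiv:2603.12019 — 3 statements merged into one kernel-verified Lean document; each statement's English description precedes it below -/
import Mathlib

section
/- Equivariance of the Clebsch–Gordan harmonic decomposition: for every R ∈ SO(3), every α, β ∈ ℝ, hᵃ, hᵇ ∈ H² and H ∈ H⁴, the image under R of the Clebsch–Gordan combination of (α, β, hᵃ, hᵇ, H), namely R ⋆ (α J + β K + hᵃ ⊠ 1 + (1/3)(hᵇ ⊗ 1 + 1 ⊗ hᵇ) + H), equals the Clebsch–Gordan combination of (α, β, R hᵃ Rᵀ, R hᵇ Rᵀ, R ⋆ H). -/
open scoped BigOperators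
open Matrix

/-- Fourth-order tensors on `ℝ³`. -/
abbrev Tens4 : Type := Fin 3 → Fin 3 → Fin 3 → Fin 3 → ℝ

/-- 3×3 real matrices. -/
abbrev Mat3 : Type := Matrix (Fin 3) (Fin 3) ℝ

/-- Kronecker delta on `Fin 3`. -/
noncomputable def kdelta (i j : Fin 3) : ℝ := if i = j then 1 else 0

/-- Minor and major index symmetries of an elasticity tensor. -/
def IsEla (C : Tens4) : Prop :=
  ∀ i j k l, C i j k l = C j i k l ∧ C i j k l = C i j l k ∧ C i j k l = C k l i j

/-- Harmonic second-order tensors: symmetric and trace free. -/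
def IsH2 (h : Mat3) : Prop := h.IsSymm ∧ h.trace = 0

/-- Harmonic fourth-order tensors: totally symmetric and trace free. -/
def IsH4 (H : Tens4) : Prop :=
  (∀ (σ : Equiv.Perm (Fin 4)) (f : Fin 4 → Fin 3),
      H (f (σ 0)) (f (σ 1)) (f (σ 2)) (f (σ 3)) = H (f 0) (f 1) (f 2) (f 3)) ∧
  (∀ k l, ∑ i, H i i k l = 0)

/-- Spherical projector `K`. -/
noncomputable def Kt (i j k l : Fin 3) : ℝ := (1/3) * kdelta i j * kdelta k l

/-- Identity tensor `I` on symmetric second order tensors. -/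
noncomputable def It (i j k l : Fin 3) : ℝ :=
  (1/2) * (kdelta i k * kdelta j l + kdelta i l * kdelta j k)

/-- Deviatoric projector `J = I - K`. -/
noncomputable def Jt (i j k l : Fin 3) : ℝ := It i j k l - Kt i j k l

/-- The product `h ⊠ 1` for a harmonic second order tensor `h`. -/
noncomputable def boxOne (h : Mat3) (i j k l : Fin 3) : ℝ :=
  (1/7) * (3 * (h i k * kdelta j l + h i l * kdelta j k + kdelta i k * h j l + kdelta i l * h j k)
    - 4 * (h i j * kdelta k l + kdelta i j * h k l))

/-- The Clebsch–Gordan combination of `(α, β, hᵃ, hᵇ, H)`. -/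
noncomputable def CG (α β : ℝ) (ha hb : Mat3) (H : Tens4) (i j k l : Fin 3) : ℝ :=
  α * Jt i j k l + β * Kt i j k l + boxOne ha i j k l
    + (1/3) * (hb i j * kdelta k l + kdelta i j * hb k l) + H i j k l

/-- A rotation matrix: `RᵀR = 1` and `det R = 1`. -/
def IsSO3 (R : Mat3) : Prop := Rᵀ * R = 1 ∧ R.det = 1

/-- The action `R ⋆ T` of a rotation on a fourth-order tensor. -/
noncomputable def rot4 (R : Mat3) (T : Tens4) (i j k l : Fin 3) : ℝ :=
  ∑ p, ∑ q, ∑ r, ∑ s, R i p * R j q * R k r * R l s * T p q r s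

/-!
The action `rot4 R` is linear, commutes with permutations of the indices, and sends `A ⊗ B` to
`(R A Rᵀ) ⊗ (R B Rᵀ)`. Apart from `H`, every term of the Clebsch–Gordan combination is a linear
combination of index permutations of `1 ⊗ 1`, `h ⊗ 1` and `1 ⊗ h`, so equivariance reduces to
`R 1 Rᵀ = 1`, that is, to the orthogonality of `R`.
-/

theorem mul_mul_transpose_apply {l m n o α : Type*} [Fintype m] [Fintype n] [CommSemiring α]
    (R : Matrix l m α) (A : Matrix m n α) (S : Matrix o n α) (i : l) (j : o) :
    (R * A * Sᵀ) i j = ∑ p, ∑ q, R i p * S j q * A p q := by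
  simp only [Matrix.mul_apply, Matrix.transpose_apply, Finset.sum_mul]
  rw [Finset.sum_comm]
  simp only [mul_right_comm]

/-- The tensor product `A ⊗ B` of two second-order tensors, the building block of `Kt` and of the
terms `h_ij δ_kl`, `δ_ij h_kl`. -/
def outer (A B : Mat3) : Tens4 := fun i j k l => A i j * B k l

/-- The tensor product of `A` and `B` with `A` carrying one index of each pair `ij`, `kl`,
symmetrized (without a factor `1/2`) in the pair `kl`. It is the building block of `It` and of the
terms of `boxOne` with coefficient `3`. -/
def symmOuter (A B : Mat3) : Tens4 := fun i j k l => A i k * B j l + A i l * B j k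

section Rot4

variable (R A B : Mat3) (T : Tens4)

theorem isLinearMap_rot4 : IsLinearMap ℝ (rot4 R) where
  map_add S T := by
    funext i j k l
    simp only [rot4, Pi.add_apply, mul_add, Finset.sum_add_distrib]
  map_smul c T := by
    funext i j k l
    simp only [rot4, Pi.smul_apply, smul_eq_mul, Finset.mul_sum, mul_left_comm]

theorem rot4_swap_middle :
    rot4 R (fun i j k l => T i k j l) = fun i j k l => rot4 R T i k j l := by
  funext i j k l
  refine Finset.sum_congr rfl fun p _ => ?_
  rw [Finset.sum_comm]
  simp only [mul_right_comm (R i p)]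

theorem rot4_swap_last :
    rot4 R (fun i j k l => T i j l k) = fun i j k l => rot4 R T i j l k := by
  funext i j k l
  refine Finset.sum_congr rfl fun p _ => Finset.sum_congr rfl fun q _ => ?_
  rw [Finset.sum_comm]
  simp only [mul_right_comm (R i p * R j q)]

theorem rot4_outer : rot4 R (outer A B) = outer (R * A * Rᵀ) (R * B * Rᵀ) := by
  funext i j k l
  simp only [rot4, outer, mul_mul_transpose_apply, Finset.sum_mul]
  simp only [Finset.mul_sum]
  refine Finset.sum_congr rfl fun p _ => Finset.sum_congr rfl fun q _ =>
    Finset.sum_congr rfl fun r _ => Finset.sum_congr rfl fun s _ => ?_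
  ring

theorem rot4_symmOuter : rot4 R (symmOuter A B) = symmOuter (R * A * Rᵀ) (R * B * Rᵀ) := by
  have rot4_ik_jl : rot4 R (fun i j k l => A i k * B j l) =
      fun i j k l => (R * A * Rᵀ) i k * (R * B * Rᵀ) j l := by
    refine (rot4_swap_middle R (outer A B)).trans ?_
    rw [rot4_outer]
    rfl
  have rot4_il_jk : rot4 R (fun i j k l => A i l * B j k) =
      fun i j k l => (R * A * Rᵀ) i l * (R * B * Rᵀ) j k := by
    rw [rot4_swap_last R (fun i j k l => A i k * B j l), rot4_ik_jl]
  calc rot4 R (symmOuter A B)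
      = rot4 R (fun i j k l => A i k * B j l) + rot4 R (fun i j k l => A i l * B j k) :=
        (isLinearMap_rot4 R).map_add _ _
    _ = symmOuter (R * A * Rᵀ) (R * B * Rᵀ) := by
        rw [rot4_ik_jl, rot4_il_jk]
        rfl

end Rot4

theorem kdelta_eq_one_apply (i j : Fin 3) : kdelta i j = (1 : Mat3) i j :=
  Matrix.one_apply.symm

theorem Kt_eq_smul_outer : Kt = (1 / 3 : ℝ) • outer 1 1 := by
  funext i j k l
  simp only [Kt, kdelta_eq_one_apply, outer, Pi.smul_apply, smul_eq_mul, mul_assoc]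

theorem It_eq_smul_symmOuter : It = (1 / 2 : ℝ) • symmOuter 1 1 := by
  funext i j k l
  simp only [It, kdelta_eq_one_apply, symmOuter, Pi.smul_apply, smul_eq_mul]

theorem boxOne_eq_smul_sub (h : Mat3) : boxOne h = (1 / 7 : ℝ) •
    ((3 : ℝ) • (symmOuter h 1 + symmOuter 1 h) - (4 : ℝ) • (outer h 1 + outer 1 h)) := by
  funext i j k l
  simp only [boxOne, kdelta_eq_one_apply, outer, symmOuter, Pi.smul_apply, Pi.add_apply,
    Pi.sub_apply, smul_eq_mul, add_assoc]

theorem CG_eq_sum (α β : ℝ) (ha hb : Mat3) (H : Tens4) :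
    CG α β ha hb H =
      α • Jt + β • Kt + boxOne ha + (1 / 3 : ℝ) • (outer hb 1 + outer 1 hb) + H := by
  funext i j k l
  simp only [CG, kdelta_eq_one_apply, outer, Pi.smul_apply, Pi.add_apply, smul_eq_mul]

theorem mul_one_mul_transpose_of_mem_orthogonalGroup {n α : Type*} [Fintype n] [DecidableEq n]
    [CommRing α] {R : Matrix n n α} (hR : R ∈ Matrix.orthogonalGroup n α) : R * 1 * Rᵀ = 1 := by
  rw [mul_one]
  exact (Matrix.mem_orthogonalGroup_iff _ _).mp hR

theorem IsSO3.mem_orthogonalGroup {R : Mat3} (hR : IsSO3 R) :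
    R ∈ Matrix.orthogonalGroup (Fin 3) ℝ :=
  (Matrix.mem_orthogonalGroup_iff' _ _).mpr hR.1

section Orthogonal

variable {R : Mat3}

theorem rot4_Kt (hR : R ∈ Matrix.orthogonalGroup (Fin 3) ℝ) : rot4 R Kt = Kt := by
  rw [Kt_eq_smul_outer, (isLinearMap_rot4 R).map_smul, rot4_outer,
    mul_one_mul_transpose_of_mem_orthogonalGroup hR]

theorem rot4_It (hR : R ∈ Matrix.orthogonalGroup (Fin 3) ℝ) : rot4 R It = It := by
  rw [It_eq_smul_symmOuter, (isLinearMap_rot4 R).map_smul, rot4_symmOuter,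
    mul_one_mul_transpose_of_mem_orthogonalGroup hR]

theorem rot4_Jt (hR : R ∈ Matrix.orthogonalGroup (Fin 3) ℝ) : rot4 R Jt = Jt :=
  calc rot4 R Jt = rot4 R It - rot4 R Kt := (isLinearMap_rot4 R).map_sub It Kt
    _ = Jt := by rw [rot4_It hR, rot4_Kt hR]; rfl

theorem rot4_boxOne (hR : R ∈ Matrix.orthogonalGroup (Fin 3) ℝ) (h : Mat3) :
    rot4 R (boxOne h) = boxOne (R * h * Rᵀ) := by
  simp only [boxOne_eq_smul_sub, (isLinearMap_rot4 R).map_add, (isLinearMap_rot4 R).map_sub,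
    (isLinearMap_rot4 R).map_smul, rot4_outer, rot4_symmOuter,
    mul_one_mul_transpose_of_mem_orthogonalGroup hR]

theorem cg_equivariant_general (hR : R ∈ Matrix.orthogonalGroup (Fin 3) ℝ)
    (α β : ℝ) (ha hb : Mat3) (H : Tens4) :
    rot4 R (CG α β ha hb H) = CG α β (R * ha * Rᵀ) (R * hb * Rᵀ) (rot4 R H) := by
  simp only [CG_eq_sum, (isLinearMap_rot4 R).map_add, (isLinearMap_rot4 R).map_smul,
    rot4_Jt hR, rot4_Kt hR, rot4_boxOne hR, rot4_outer,
    mul_one_mul_transpose_of_mem_orthogonalGroup hR]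

end Orthogonal

/-- Equivariance of the Clebsch–Gordan harmonic decomposition. -/
theorem cg_equivariant (R : Mat3) (hR : IsSO3 R) (α β : ℝ) (ha hb : Mat3) (H : Tens4)
    (hha : IsH2 ha) (hhb : IsH2 hb) (hH : IsH4 H) :
    ∀ i j k l, rot4 R (CG α β ha hb H) i j k l =
      CG α β (R * ha * Rᵀ) (R * hb * Rᵀ) (rot4 R H) i j k l := by
  intro i j k l
  rw [cg_equivariant_general hR.mem_orthogonalGroup]
end

section
/- Theorem 5 (equality of pair symmetry groups): let n, m, k ∈ ℝ³ be unit vectors, α, β ∈ ℝ nonzero, hᵃ = α(n nᵀ − (1/3)·1), hᵇ = β(m mᵀ − (1/3)·1), and suppose every R ∈ SO(3) with R k = k satisfies R hᵃ Rᵀ = hᵃ and R hᵇ Rᵀ = hᵇ. Then for every fourth-order tensor H : Fin 3 → Fin 3 → Fin 3 → Fin 3 → ℝ, the set {R ∈ SO(3) | R ⋆ H = H and R hᵃ Rᵀ = hᵃ} equals the set {R ∈ SO(3) | R ⋆ H = H and R hᵇ Rᵀ = hᵇ}. -/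
open scoped BigOperators
open Matrix

/-- The rank-one deviator `n nᵀ - (1/3)·1` associated with a vector `n`. -/
noncomputable def devRank1 (n : Fin 3 → ℝ) : Mat3 :=
  Matrix.vecMulVec n n - (1/3 : ℝ) • 1

/-!
Suppose a rotation `Q` with `Q ^ 2 ≠ 1` preserves both `n nᵀ` and `m mᵀ`. Then `Q n = ± n` and
`Q m = ± m`, so `Q ^ 2` fixes both `n` and `m`. A rotation fixing two independent vectors also fixes
their cross product and is therefore the identity; hence `n` and `m` are parallel, and the two
deviators have the same symmetries. The quarter turn about `k` is such a `Q`, since its square is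
the half turn `2 k kᵀ - 1`.
-/

theorem eq_or_eq_neg_of_vecMulVec_self_eq {ι R : Type*} [CommRing R] [IsDomain R]
    {v w : ι → R} (h : vecMulVec v v = vecMulVec w w) : v = w ∨ v = -w := by
  have h_entry (i j : ι) : v i * v j = w i * w j := congrFun₂ h i j
  by_cases hw : w = 0
  · left
    ext i
    simpa [hw] using h_entry i i
  obtain ⟨i, hi⟩ := Function.ne_iff.mp hw
  refine (mul_self_eq_mul_self_iff.mp (h_entry i i)).imp (fun hvi ↦ ?_) (fun hvi ↦ ?_) <;>
    ext j <;> refine mul_left_cancel₀ hi ?_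
  · rw [← h_entry, hvi]
  · rw [Pi.neg_apply, mul_neg, ← h_entry, hvi, neg_mul, neg_neg]

section Conjugation

variable {ι R : Type*} [Fintype ι]

theorem mul_smul_mul_eq_smul_iff [Field R] {c : R} (hc : c ≠ 0) {A B C : Matrix ι ι R} :
    A * (c • B) * C = c • B ↔ A * B * C = B := by
  rw [Matrix.mul_smul, Matrix.smul_mul]
  exact (smul_right_injective _ hc).eq_iff

theorem mul_vecMulVec_self_mul_transpose [CommSemiring R] (A : Matrix ι ι R) (v : ι → R) :
    A * vecMulVec v v * Aᵀ = vecMulVec (A *ᵥ v) (A *ᵥ v) := by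
  rw [mul_vecMulVec, vecMulVec_mul, vecMul_transpose]

theorem mul_self_mulVec_of_conj_vecMulVec_self_eq [CommRing R] [IsDomain R]
    {A : Matrix ι ι R} {v : ι → R} (h : A * vecMulVec v v * Aᵀ = vecMulVec v v) :
    (A * A) *ᵥ v = v := by
  rw [mul_vecMulVec_self_mul_transpose] at h
  rw [← mulVec_mulVec]
  rcases eq_or_eq_neg_of_vecMulVec_self_eq h with hv | hv <;> simp [hv, mulVec_neg]

theorem conj_vecMulVec_smul_self_eq_iff [Field R] {c : R} (hc : c ≠ 0) {A : Matrix ι ι R}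
    {v : ι → R} :
    A * vecMulVec (c • v) (c • v) * Aᵀ = vecMulVec (c • v) (c • v) ↔
      A * vecMulVec v v * Aᵀ = vecMulVec v v := by
  rw [smul_vecMulVec, vecMulVec_smul, mul_smul_mul_eq_smul_iff hc, mul_smul_mul_eq_smul_iff hc]

end Conjugation

theorem conj_smul_devRank1_eq_iff {R : Mat3} (hR : Rᵀ * R = 1) {a : ℝ} (ha : a ≠ 0)
    (v : Fin 3 → ℝ) :
    R * (a • devRank1 v) * Rᵀ = a • devRank1 v ↔ R * vecMulVec v v * Rᵀ = vecMulVec v v := by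
  have h_conj_one : R * ((1 / 3 : ℝ) • (1 : Mat3)) * Rᵀ = (1 / 3 : ℝ) • 1 := by
    rw [mul_smul_mul_eq_smul_iff (by norm_num), mul_one, mul_eq_one_comm.mp hR]
  rw [mul_smul_mul_eq_smul_iff ha, devRank1, mul_sub, sub_mul, h_conj_one, sub_left_inj]

theorem transpose_mulVec_cross_mulVec {R : Type*} [CommRing R] (A : Matrix (Fin 3) (Fin 3) R)
    (v w : Fin 3 → R) :
    Aᵀ *ᵥ ((A *ᵥ v) ⨯₃ (A *ᵥ w)) = A.det • v ⨯₃ w := by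
  refine dotProduct_eq _ _ fun u ↦ ?_
  have h_rows : of ![A *ᵥ u, A *ᵥ v, A *ᵥ w] = of ![u, v, w] * Aᵀ := by
    ext i j
    fin_cases i <;> simp [mul_apply, mulVec, dotProduct, mul_comm]
  calc Aᵀ *ᵥ ((A *ᵥ v) ⨯₃ (A *ᵥ w)) ⬝ᵥ u
      = (A *ᵥ u) ⬝ᵥ (A *ᵥ v) ⨯₃ (A *ᵥ w) := by
        rw [dotProduct_comm, dotProduct_mulVec, vecMul_transpose]
    _ = (of ![A *ᵥ u, A *ᵥ v, A *ᵥ w]).det := triple_product_eq_det _ _ _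
    _ = A.det * (of ![u, v, w]).det := by rw [h_rows, det_mul, det_transpose, mul_comm]
    _ = A.det * (u ⬝ᵥ v ⨯₃ w) := congrArg _ (triple_product_eq_det u v w).symm
    _ = (A.det • v ⨯₃ w) ⬝ᵥ u := by rw [smul_dotProduct, smul_eq_mul, dotProduct_comm]

theorem IsSO3.mul {P Q : Mat3} (hP : IsSO3 P) (hQ : IsSO3 Q) : IsSO3 (P * Q) := by
  constructor
  · rw [transpose_mul, mul_assoc, ← mul_assoc Pᵀ, hP.1, one_mul, hQ.1]
  · rw [det_mul, hP.2, hQ.2, one_mul]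

theorem IsSO3.eq_one_of_linearIndependent {P : Mat3} (hP : IsSO3 P) {v w : Fin 3 → ℝ}
    (hvw : LinearIndependent ℝ ![v, w]) (hv : P *ᵥ v = v) (hw : P *ᵥ w = w) : P = 1 := by
  have h_cross : P *ᵥ (v ⨯₃ w) = v ⨯₃ w := by
    have h := transpose_mulVec_cross_mulVec P v w
    rw [hv, hw, hP.2, one_smul] at h
    rw [← h, mulVec_mulVec, mul_eq_one_comm.mp hP.1, one_mulVec, h]
  let B : Mat3 := of ![v ⨯₃ w, v, w]
  have hB : IsUnit B := by
    rw [isUnit_iff_isUnit_det, isUnit_iff_ne_zero]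
    change det ![v ⨯₃ w, v, w] ≠ 0
    rw [← triple_product_eq_det, Ne, dotProduct_self_eq_zero]
    exact crossProduct_ne_zero_iff_linearIndependent.mpr hvw
  have h_fixed : B * Pᵀ = B := by
    ext i j
    rw [mul_apply_eq_vecMul, vecMul_transpose]
    fin_cases i
    exacts [congrFun h_cross j, congrFun hv j, congrFun hw j]
  exact transpose_eq_one.mp (hB.mul_eq_left.mp h_fixed)

theorem IsSO3.exists_eq_smul_of_conj_vecMulVec_self_eq {Q : Mat3} (hQ : IsSO3 Q)
    (hQQ : Q * Q ≠ 1) {v w : Fin 3 → ℝ} (hv₀ : v ≠ 0)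
    (hv : Q * vecMulVec v v * Qᵀ = vecMulVec v v)
    (hw : Q * vecMulVec w w * Qᵀ = vecMulVec w w) : ∃ c : ℝ, w = c • v := by
  by_contra! h_not_parallel
  have h_indep : LinearIndependent ℝ ![v, w] :=
    (LinearIndependent.pair_iff' hv₀).mpr fun c h ↦ h_not_parallel c h.symm
  exact hQQ <| (hQ.mul hQ).eq_one_of_linearIndependent h_indep
    (mul_self_mulVec_of_conj_vecMulVec_self_eq hv)
    (mul_self_mulVec_of_conj_vecMulVec_self_eq hw)

section QuarterTurn

variable {R : Type*} [CommRing R]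

/-- The matrix `k kᵀ + [k]ₓ`, which for a unit vector `k` is the rotation by a right angle about
the axis `k`. -/
def quarterTurn (k : Fin 3 → R) : Matrix (Fin 3) (Fin 3) R :=
  vecMulVec k k + (crossProduct k).toMatrix'

theorem quarterTurn_mulVec (k v : Fin 3 → R) :
    quarterTurn k *ᵥ v = (k ⬝ᵥ v) • k + k ⨯₃ v := by
  rw [quarterTurn, add_mulVec, vecMulVec_mulVec, LinearMap.toMatrix'_mulVec, op_smul_eq_smul]

theorem quarterTurn_mulVec_self {k : Fin 3 → R} (hk : k ⬝ᵥ k = 1) :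
    quarterTurn k *ᵥ k = k := by
  rw [quarterTurn_mulVec, hk, one_smul, cross_self, add_zero]

theorem quarterTurn_eq_of (k : Fin 3 → R) :
    quarterTurn k =
      !![k 0 * k 0, k 0 * k 1 - k 2, k 0 * k 2 + k 1;
        k 1 * k 0 + k 2, k 1 * k 1, k 1 * k 2 - k 0;
        k 2 * k 0 - k 1, k 2 * k 1 + k 0, k 2 * k 2] := by
  ext i j
  fin_cases i <;> fin_cases j <;>
    simp [quarterTurn, LinearMap.toMatrix'_apply, cross_apply, vecMulVec_apply, sub_eq_add_neg]

theorem transpose_quarterTurn (k : Fin 3 → R) : (quarterTurn k)ᵀ = quarterTurn (-k) := by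
  rw [quarterTurn_eq_of, quarterTurn_eq_of]
  ext i j
  fin_cases i <;> fin_cases j <;> simp [sub_eq_add_neg, mul_comm]

theorem det_quarterTurn (k : Fin 3 → R) : (quarterTurn k).det = (k ⬝ᵥ k) ^ 2 := by
  rw [quarterTurn_eq_of, det_fin_three, vec3_dotProduct]
  simp only [of_apply, cons_val]
  ring

theorem transpose_quarterTurn_mul_self {k : Fin 3 → R} (hk : k ⬝ᵥ k = 1) :
    (quarterTurn k)ᵀ * quarterTurn k = 1 := by
  refine ext_iff_mulVec.mpr fun v ↦ ?_
  rw [transpose_quarterTurn, ← mulVec_mulVec, quarterTurn_mulVec, quarterTurn_mulVec]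
  simp [hk, cross_cross_eq_smul_sub_smul']

theorem quarterTurn_mul_self {k : Fin 3 → R} (hk : k ⬝ᵥ k = 1) :
    quarterTurn k * quarterTurn k = (2 : R) • vecMulVec k k - 1 := by
  refine ext_iff_mulVec.mpr fun v ↦ ?_
  rw [← mulVec_mulVec, quarterTurn_mulVec, quarterTurn_mulVec]
  simp only [dotProduct_add, dotProduct_smul, hk, smul_eq_mul, mul_one, dot_self_cross, add_zero,
    map_add, map_smul, cross_self, smul_zero, cross_cross_eq_smul_sub_smul', one_smul, zero_add,
    sub_mulVec, smul_mulVec, vecMulVec_mulVec, op_smul_eq_smul, one_mulVec]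
  module

end QuarterTurn

theorem isSO3_quarterTurn {k : Fin 3 → ℝ} (hk : k ⬝ᵥ k = 1) : IsSO3 (quarterTurn k) :=
  ⟨transpose_quarterTurn_mul_self hk, by rw [det_quarterTurn, hk, one_pow]⟩

theorem quarterTurn_mul_self_ne_one {k : Fin 3 → ℝ} (hk : k ⬝ᵥ k = 1) :
    quarterTurn k * quarterTurn k ≠ 1 := by
  intro h
  have h_trace := congrArg trace h
  rw [quarterTurn_mul_self hk, trace_sub, trace_smul, trace_vecMulVec, hk, trace_one] at h_trace
  norm_num at h_trace

theorem pair_symmetry_equality_general {n m : Fin 3 → ℝ} (hn : n ≠ 0) (hm : m ≠ 0)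
    {α β : ℝ} (hα : α ≠ 0) (hβ : β ≠ 0) {Q : Mat3} (hQ : IsSO3 Q) (hQQ : Q * Q ≠ 1)
    (hQn : Q * (α • devRank1 n) * Qᵀ = α • devRank1 n)
    (hQm : Q * (β • devRank1 m) * Qᵀ = β • devRank1 m) {R : Mat3} (hR : Rᵀ * R = 1) :
    R * (α • devRank1 n) * Rᵀ = α • devRank1 n ↔
      R * (β • devRank1 m) * Rᵀ = β • devRank1 m := by
  rw [conj_smul_devRank1_eq_iff hQ.1 hα] at hQn
  rw [conj_smul_devRank1_eq_iff hQ.1 hβ] at hQm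
  obtain ⟨c, rfl⟩ := hQ.exists_eq_smul_of_conj_vecMulVec_self_eq hQQ hn hQn hQm
  rw [conj_smul_devRank1_eq_iff hR hα, conj_smul_devRank1_eq_iff hR hβ,
    conj_vecMulVec_smul_self_eq_iff (left_ne_zero_of_smul hm)]

theorem dotProduct_self_eq_sum_sq {ι R : Type*} [Fintype ι] [CommSemiring R] (v : ι → R) :
    v ⬝ᵥ v = ∑ i, v i ^ 2 := by
  simp only [dotProduct, sq]

theorem ne_zero_of_sum_sq_eq_one {ι R : Type*} [Fintype ι] [CommSemiring R] [Nontrivial R]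
    {v : ι → R} (hv : ∑ i, v i ^ 2 = 1) : v ≠ 0 := by
  rintro rfl
  simp at hv

/-- Theorem 5: if `hᵃ` and `hᵇ` are transversely isotropic deviators whose pair is
still transversely isotropic, then for every fourth-order tensor `H` the symmetry
set of the pair `(hᵃ, H)` coincides with that of the pair `(hᵇ, H)`. -/
theorem pair_symmetry_equality (n m k : Fin 3 → ℝ)
    (hn : ∑ i, n i ^ 2 = 1) (hm : ∑ i, m i ^ 2 = 1) (hk : ∑ i, k i ^ 2 = 1)
    (α β : ℝ) (hα : α ≠ 0) (hβ : β ≠ 0)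
    (hfix : ∀ R : Mat3, IsSO3 R → R.mulVec k = k →
      R * (α • devRank1 n) * Rᵀ = α • devRank1 n ∧
      R * (β • devRank1 m) * Rᵀ = β • devRank1 m) :
    ∀ H : Tens4,
      {R : Mat3 | IsSO3 R ∧ rot4 R H = H ∧
          R * (α • devRank1 n) * Rᵀ = α • devRank1 n} =
      {R : Mat3 | IsSO3 R ∧ rot4 R H = H ∧
          R * (β • devRank1 m) * Rᵀ = β • devRank1 m} := by
  intro H
  have hk_unit : k ⬝ᵥ k = 1 := (dotProduct_self_eq_sum_sq k).trans hk
  obtain ⟨hQn, hQm⟩ :=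
    hfix (quarterTurn k) (isSO3_quarterTurn hk_unit) (quarterTurn_mulVec_self hk_unit)
  ext R
  exact and_congr_right fun hR ↦ and_congr_right fun _ ↦
    pair_symmetry_equality_general (ne_zero_of_sum_sq_eq_one hn) (ne_zero_of_sum_sq_eq_one hm)
      hα hβ (isSO3_quarterTurn hk_unit) (quarterTurn_mul_self_ne_one hk_unit) hQn hQm hR.1
end

section
/- Isotropic deviatoric elasticity of the IDTI normal form: let a, b, c ∈ ℝ and let C be the fourth-order tensor on ℝ³ determined (together with all components obtained from the minor and major index symmetries) by C₁₁₁₁ = C₂₂₂₂ = a, C₁₁₂₂ = b, C₁₁₃₃ = C₂₂₃₃ = c, C₃₃₃₃ = a − 2b + 2c, C₁₃₁₃ = C₂₃₂₃ = (a − b)/2, C₁₂₁₂ = (a − b)/2, all other components zero. Then the deviatoric restriction of C is isotropic: ∑_{p,q,r,s} J_ijpq C_pqrs J_rskl = (a − b) · J_ijkl for all i, j, k, l. -/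
open scoped BigOperators

/-! A coupling term `δ ⊗ g + g ⊗ δ` is invisible to deviators, because `J` annihilates `δ` on both
sides; hence `J : (m I + δ ⊗ g + g ⊗ δ) : J = m J` for every second-order tensor `g`. The IDTI
normal form is of this shape, with `m = a - b` and `g = diag (b/2, b/2, c - b/2)`. Double
contraction of fourth-order tensors is matrix multiplication over pairs of indices. -/

open Matrix

theorem mul_smul_add_vecMulVec_mul {l m n o R : Type*} [Fintype m] [Fintype n] [CommSemiring R]
    {P : Matrix l m R} {Q : Matrix n o R} {d : m → R} {e : n → R} (hPd : P *ᵥ d = 0)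
    (heQ : e ᵥ* Q = 0) (c : R) (A : Matrix m n R) (g : n → R) (h : m → R) :
    P * (c • A + (vecMulVec d g + vecMulVec h e)) * Q = c • (P * A * Q) := by
  have h_left : P * vecMulVec d g * Q = 0 := by
    rw [mul_vecMulVec, hPd, zero_vecMulVec, Matrix.zero_mul]
  have h_right : P * vecMulVec h e * Q = 0 := by
    rw [Matrix.mul_assoc, vecMulVec_mul, heQ, mul_vecMulVec]
    exact ext fun _ _ => mul_zero _
  rw [Matrix.mul_add, Matrix.mul_add, Matrix.add_mul, Matrix.add_mul, h_left, h_right, add_zero,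
    add_zero, Matrix.mul_smul, Matrix.smul_mul]

/-- A fourth-order tensor as the matrix, indexed by pairs, of the map it induces on second-order
tensors. All nine pairs `(i, j)` are kept, so that double contraction becomes the matrix product
without weights on the off-diagonal pairs. -/
def Tens4.toMatrix (C : Tens4) : Matrix (Fin 3 × Fin 3) (Fin 3 × Fin 3) ℝ :=
  Matrix.of fun x y => C x.1 x.2 y.1 y.2

theorem Tens4.toMatrix_mul_mul_apply (A C B : Tens4) (i j k l : Fin 3) :
    (A.toMatrix * C.toMatrix * B.toMatrix) (i, j) (k, l) =
      ∑ p, ∑ q, ∑ r, ∑ s, A i j p q * C p q r s * B r s k l := by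
  rw [Matrix.mul_assoc]
  simp only [Matrix.mul_apply, Fintype.sum_prod_type, Finset.mul_sum, Tens4.toMatrix,
    Matrix.of_apply, mul_assoc]

theorem IsEla.transpose_toMatrix {C : Tens4} (hC : IsEla C) : C.toMatrixᵀ = C.toMatrix := by
  ext ⟨i, j⟩ ⟨k, l⟩
  exact (hC k l i j).2.2

/-- The Kronecker delta as a vector indexed by pairs, on which `Tens4.toMatrix` matrices act. -/
noncomputable def kdeltaVec : Fin 3 × Fin 3 → ℝ := fun x => kdelta x.1 x.2

theorem kdelta_comm (i j : Fin 3) : kdelta i j = kdelta j i := by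
  simp only [kdelta, eq_comm]

theorem isEla_It : IsEla It := by
  intro i j k l
  refine ⟨?_, ?_, ?_⟩ <;> simp only [It, kdelta_comm k, kdelta_comm l] <;> ring

theorem It_mulVec_apply (v : Fin 3 × Fin 3 → ℝ) (i j : Fin 3) :
    (Tens4.toMatrix It *ᵥ v) (i, j) = (v (i, j) + v (j, i)) / 2 := by
  calc (Tens4.toMatrix It *ᵥ v) (i, j)
      = (∑ p, ∑ q, kdelta i p * kdelta j q * v (p, q) +
          ∑ p, ∑ q, kdelta i q * kdelta j p * v (p, q)) / 2 := by
        simp only [mulVec, dotProduct, Fintype.sum_prod_type, Tens4.toMatrix, of_apply, It,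
          ← Finset.sum_add_distrib, Finset.sum_div]
        refine Finset.sum_congr rfl fun p _ => Finset.sum_congr rfl fun q _ => ?_
        ring
    _ = (v (i, j) + v (j, i)) / 2 := by simp [kdelta]

theorem It_mulVec_kdeltaVec : Tens4.toMatrix It *ᵥ kdeltaVec = kdeltaVec := by
  ext ⟨i, j⟩
  simp only [It_mulVec_apply, kdeltaVec, kdelta_comm j i, add_self_div_two]

theorem kdeltaVec_vecMul_It : kdeltaVec ᵥ* Tens4.toMatrix It = kdeltaVec := by
  rw [← mulVec_transpose, isEla_It.transpose_toMatrix, It_mulVec_kdeltaVec]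

theorem It_mul_It : Tens4.toMatrix It * Tens4.toMatrix It = Tens4.toMatrix It := by
  ext ⟨i, j⟩ ⟨k, l⟩
  calc (Tens4.toMatrix It * Tens4.toMatrix It) (i, j) (k, l)
      = (It i j k l + It j i k l) / 2 := It_mulVec_apply (fun x => It x.1 x.2 k l) i j
    _ = It i j k l := by rw [← (isEla_It i j k l).1, add_self_div_two]

theorem kdeltaVec_dotProduct_kdeltaVec : kdeltaVec ⬝ᵥ kdeltaVec = 3 := by
  simp [dotProduct, Fintype.sum_prod_type, kdeltaVec, kdelta]

theorem toMatrix_Jt :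
    Tens4.toMatrix Jt = Tens4.toMatrix It - (1 / 3 : ℝ) • vecMulVec kdeltaVec kdeltaVec := by
  ext ⟨i, j⟩ ⟨k, l⟩
  simp [Tens4.toMatrix, Jt, Kt, kdeltaVec, vecMulVec_apply, mul_assoc]

theorem Jt_mulVec_kdeltaVec : Tens4.toMatrix Jt *ᵥ kdeltaVec = 0 := by
  rw [toMatrix_Jt, sub_mulVec, smul_mulVec, vecMulVec_mulVec, It_mulVec_kdeltaVec,
    kdeltaVec_dotProduct_kdeltaVec, op_smul_eq_smul, smul_smul, one_div_mul_cancel three_ne_zero,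
    one_smul, sub_self]

theorem kdeltaVec_vecMul_Jt : kdeltaVec ᵥ* Tens4.toMatrix Jt = 0 := by
  have hJ : (Tens4.toMatrix Jt)ᵀ = Tens4.toMatrix Jt := by
    rw [toMatrix_Jt, transpose_sub, transpose_smul, transpose_vecMulVec,
      isEla_It.transpose_toMatrix]
  rw [← mulVec_transpose, hJ, Jt_mulVec_kdeltaVec]

theorem Jt_mul_It : Tens4.toMatrix Jt * Tens4.toMatrix It = Tens4.toMatrix Jt := by
  rw [toMatrix_Jt, Matrix.sub_mul, Matrix.smul_mul, vecMulVec_mul, kdeltaVec_vecMul_It, It_mul_It]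

theorem Jt_mul_Jt : Tens4.toMatrix Jt * Tens4.toMatrix Jt = Tens4.toMatrix Jt := by
  nth_rw 2 [toMatrix_Jt]
  rw [Matrix.mul_sub, Jt_mul_It, Matrix.mul_smul, mul_vecMulVec, Jt_mulVec_kdeltaVec,
    zero_vecMulVec, smul_zero, sub_zero]

/-- The tensor `m I + δ ⊗ g + g ⊗ δ`: an isotropic action of modulus `m` on deviators, coupled to
the spherical part through `g`. -/
noncomputable def coupledTensor (m : ℝ) (g : Mat3) : Tens4 := fun i j k l =>
  m * It i j k l + (kdelta i j * g k l + g i j * kdelta k l)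

theorem toMatrix_coupledTensor (m : ℝ) (g : Mat3) :
    (coupledTensor m g).toMatrix = m • Tens4.toMatrix It +
      (vecMulVec kdeltaVec (fun x => g x.1 x.2) + vecMulVec (fun x => g x.1 x.2) kdeltaVec) :=
  rfl

theorem isEla_coupledTensor (m : ℝ) {g : Mat3} (hg : g.IsSymm) : IsEla (coupledTensor m g) := by
  intro i j k l
  obtain ⟨h_left, h_right, h_major⟩ := isEla_It i j k l
  refine ⟨?_, ?_, ?_⟩
  · simp only [coupledTensor, h_left, kdelta_comm i j, hg.apply j i]
  · simp only [coupledTensor, h_right, kdelta_comm k l, hg.apply l k]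
  · simp only [coupledTensor, h_major]
    ring

theorem sum_Jt_mul_coupledTensor_mul_Jt (m : ℝ) (g : Mat3) (i j k l : Fin 3) :
    ∑ p, ∑ q, ∑ r, ∑ s, Jt i j p q * coupledTensor m g p q r s * Jt r s k l =
      m * Jt i j k l := by
  rw [← Tens4.toMatrix_mul_mul_apply, toMatrix_coupledTensor,
    mul_smul_add_vecMulVec_mul Jt_mulVec_kdeltaVec kdeltaVec_vecMul_Jt, Jt_mul_It, Jt_mul_Jt]
  rfl

/-- Voigt's enumeration `11, 22, 33, 23, 13, 12` of the unordered pairs of axes, 0-based. -/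
def voigt : Fin 6 → Fin 3 × Fin 3 := ![(0, 0), (1, 1), (2, 2), (1, 2), (0, 2), (0, 1)]

theorem exists_voigt_eq_or_swap :
    ∀ i j : Fin 3, ∃ α, voigt α = (i, j) ∨ voigt α = (j, i) := by
  decide

theorem IsEla.ext_voigt {C D : Tens4} (hC : IsEla C) (hD : IsEla D)
    (h : ∀ α β, α ≤ β → C.toMatrix (voigt α) (voigt β) = D.toMatrix (voigt α) (voigt β)) :
    C = D := by
  have h_all (α β) : C.toMatrix (voigt α) (voigt β) = D.toMatrix (voigt α) (voigt β) := by
    rcases le_total α β with hαβ | hβα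
    · exact h α β hαβ
    · rw [← hC.transpose_toMatrix, ← hD.transpose_toMatrix]
      exact h β α hβα
  have h_right (α k l) : C.toMatrix (voigt α) (k, l) = D.toMatrix (voigt α) (k, l) := by
    obtain ⟨β, hβ | hβ⟩ := exists_voigt_eq_or_swap k l
    · exact hβ ▸ h_all α β
    · have h_swap : C.toMatrix (voigt α) (l, k) = D.toMatrix (voigt α) (l, k) := hβ ▸ h_all α β
      exact (hC _ _ k l).2.1.trans (h_swap.trans (hD _ _ l k).2.1)
  funext i j k l
  obtain ⟨α, hα | hα⟩ := exists_voigt_eq_or_swap i j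
  · have h_pair : C.toMatrix (i, j) (k, l) = D.toMatrix (i, j) (k, l) := hα ▸ h_right α k l
    exact h_pair
  · have h_swap : C.toMatrix (j, i) (k, l) = D.toMatrix (j, i) (k, l) := hα ▸ h_right α k l
    exact (hC i j k l).1.trans (h_swap.trans (hD j i k l).1)

/-- Isotropic deviatoric elasticity of the IDTI normal form: the deviatoric
restriction `J : C : J` is isotropic. Indices are 0-based, so `0,1,2` stand for the
axes `1,2,3`. -/
theorem idti_isotropic_deviatoric (a b c : ℝ) (C : Tens4) (hsym : IsEla C)
    (h1111 : C 0 0 0 0 = a) (h2222 : C 1 1 1 1 = a) (h1122 : C 0 0 1 1 = b)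
    (h1133 : C 0 0 2 2 = c) (h2233 : C 1 1 2 2 = c)
    (h3333 : C 2 2 2 2 = a - 2 * b + 2 * c)
    (h1313 : C 0 2 0 2 = (a - b) / 2) (h2323 : C 1 2 1 2 = (a - b) / 2)
    (h1212 : C 0 1 0 1 = (a - b) / 2)
    (z1 : C 0 0 1 2 = 0) (z2 : C 0 0 0 2 = 0) (z3 : C 0 0 0 1 = 0)
    (z4 : C 1 1 1 2 = 0) (z5 : C 1 1 0 2 = 0) (z6 : C 1 1 0 1 = 0)
    (z7 : C 2 2 1 2 = 0) (z8 : C 2 2 0 2 = 0) (z9 : C 2 2 0 1 = 0)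
    (z10 : C 1 2 0 2 = 0) (z11 : C 1 2 0 1 = 0) (z12 : C 0 2 0 1 = 0) :
    ∀ i j k l, ∑ p, ∑ q, ∑ r, ∑ s, Jt i j p q * C p q r s * Jt r s k l =
      (a - b) * Jt i j k l := by
  have hC : C = coupledTensor (a - b) (diagonal ![b / 2, b / 2, c - b / 2]) := by
    refine hsym.ext_voigt (isEla_coupledTensor _ (isSymm_diagonal _)) fun α β hαβ => ?_
    fin_cases α <;> fin_cases β <;>
      simp [voigt, Tens4.toMatrix, coupledTensor, It, kdelta, *] at hαβ ⊢ <;> ring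
  rw [hC]
  exact sum_Jt_mul_coupledTensor_mul_Jt _ _
end
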